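/- Let n > 1 be an integer and let p be an odd prime with p > rad(n). Then for each positive integer k, (1, n^{p(p-1)k} - 1, n^{p(p-1)k}) is an abc triple. -/

import Mathlib

open scoped Classical

/-- The radical of a natural number: the product of its distinct prime factors. -/
def rad (n : ℕ) : ℕ := ∏ p ∈ n.primeFactors, p

/-- The cosocle of a natural number: `n / rad n`. -/
def cosocle (n : ℕ) : ℕ := n / rad n

/-- `(a, b, c)` is an abc triple: `a, b, c` are relatively prime positive integers with
`a + b = c` and `rad (a*b*c) < c`. -/
def IsABCTriple (a b c : ℕ) : Prop :=
  0 < a ∧ 0 < b ∧ 0 < c ∧ a + b = c ∧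
    Nat.Coprime a b ∧ Nat.Coprime a c ∧ Nat.Coprime b c ∧ rad (a * b * c) < c

/-!
If `a + b = c` with `a`, `b` coprime, then `rad (a * b * c) ≤ rad (a * c) * rad b`, so
`(a, b, c)` is an abc triple as soon as `rad (a * c)` is at most the cosocle `b / rad b`.
A square factor `m ^ 2` of `b` contributes a factor `m` to that cosocle, and Euler's theorem
modulo `m ^ 2`, where `φ (m ^ 2) = m * φ m`, supplies such a factor of
`b = n ^ (m * φ m * k) - 1` for every `m` coprime to `n`. Since `rad (n ^ e) = rad n`, it remains
to have `rad n ≤ m`.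
-/

open UniqueFactorizationMonoid (radical radical_dvd_self radical_dvd_radical radical_mul_dvd
  radical_pow)

theorem rad_eq_radical (n : ℕ) : rad n = radical n :=
  Nat.radical_eq_prod_primeFactors.symm

theorem rad_pos (n : ℕ) : 0 < rad n := by
  rw [rad_eq_radical]
  exact Nat.radical_pos n

theorem rad_dvd_self (n : ℕ) : rad n ∣ n := by
  rw [rad_eq_radical]
  exact radical_dvd_self

theorem rad_dvd_rad {a b : ℕ} (h : a ∣ b) (hb : b ≠ 0) : rad a ∣ rad b := by
  simp only [rad_eq_radical]
  exact radical_dvd_radical h hb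

theorem rad_pow (n : ℕ) {e : ℕ} (he : e ≠ 0) : rad (n ^ e) = rad n := by
  simp only [rad_eq_radical, radical_pow n he]

theorem rad_mul_le (a b : ℕ) : rad (a * b) ≤ rad a * rad b := by
  refine Nat.le_of_dvd (Nat.mul_pos (rad_pos a) (rad_pos b)) ?_
  simp only [rad_eq_radical]
  exact radical_mul_dvd

theorem coprime_of_rad_lt_prime {n p : ℕ} (hp : p.Prime) (hn : n ≠ 0) (h : rad n < p) :
    n.Coprime p := by
  refine Nat.coprime_comm.mp (hp.coprime_iff_not_dvd.mpr fun hpn ↦ h.not_ge ?_)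
  exact Nat.le_of_dvd (rad_pos n)
    (Finset.dvd_prod_of_mem _ (Nat.mem_primeFactors.mpr ⟨hp, hpn, hn⟩))

theorem rad_mul_cosocle (n : ℕ) : rad n * cosocle n = n :=
  Nat.mul_div_cancel' (rad_dvd_self n)

theorem cosocle_pos {n : ℕ} (hn : 0 < n) : 0 < cosocle n :=
  Nat.div_pos (Nat.le_of_dvd hn (rad_dvd_self n)) (rad_pos n)

theorem dvd_cosocle_of_sq_dvd {m n : ℕ} (h : m ^ 2 ∣ n) : m ∣ cosocle n := by
  obtain ⟨t, rfl⟩ := h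
  rcases eq_or_ne (m * t) 0 with hmt | hmt
  · simp [cosocle, pow_two, mul_assoc, hmt]
  have hrad : rad (m ^ 2 * t) ∣ m * t :=
    calc rad (m ^ 2 * t) ∣ rad ((m * t) ^ 2) :=
          rad_dvd_rad ⟨t, by ring⟩ (pow_ne_zero 2 hmt)
      _ = rad (m * t) := rad_pow _ two_ne_zero
      _ ∣ m * t := rad_dvd_self _
  refine Nat.dvd_div_of_mul_dvd ?_
  calc rad (m ^ 2 * t) * m ∣ m * t * m := mul_dvd_mul_right hrad m
    _ = m ^ 2 * t := by ring

theorem isABCTriple_of_rad_le_cosocle {a b c : ℕ} (ha : 0 < a) (hb : 0 < b) (hab : a.Coprime b)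
    (habc : a + b = c) (h : rad (a * c) ≤ cosocle b) : IsABCTriple a b c := by
  subst habc
  refine ⟨ha, hb, by omega, rfl, hab, Nat.coprime_self_add_right.mpr hab,
    Nat.coprime_add_self_right.mpr hab.symm, ?_⟩
  calc rad (a * b * (a + b)) = rad (b * (a * (a + b))) := by rw [mul_comm a b, mul_assoc]
    _ ≤ rad b * rad (a * (a + b)) := rad_mul_le _ _
    _ ≤ rad b * cosocle b := Nat.mul_le_mul_left _ h
    _ = b := rad_mul_cosocle b
    _ < a + b := by omega

theorem isABCTriple_one_pow_sub_one {n m e : ℕ} (hn : 1 < n) (he : e ≠ 0)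
    (hmod : n ^ e ≡ 1 [MOD m ^ 2]) (hrad : rad n ≤ m) :
    IsABCTriple 1 (n ^ e - 1) (n ^ e) := by
  have hc : 1 < n ^ e := Nat.one_lt_pow he hn
  have hb : 0 < n ^ e - 1 := Nat.sub_pos_of_lt hc
  have hdvd : m ^ 2 ∣ n ^ e - 1 := (Nat.modEq_iff_dvd' hc.le).mp hmod.symm
  refine isABCTriple_of_rad_le_cosocle one_pos hb (Nat.coprime_one_left _)
    (Nat.add_sub_cancel' hc.le) ?_
  calc rad (1 * n ^ e) = rad n := by rw [one_mul, rad_pow n he]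
    _ ≤ m := hrad
    _ ≤ cosocle (n ^ e - 1) := Nat.le_of_dvd (cosocle_pos hb) (dvd_cosocle_of_sq_dvd hdvd)

theorem totient_sq (m : ℕ) : (m ^ 2).totient = m * m.totient := by
  rcases Nat.eq_zero_or_pos m with rfl | hm
  · simp
  have gcd_formula := Nat.totient_gcd_mul_totient_mul m m
  rw [Nat.gcd_self, mul_assoc, ← pow_two] at gcd_formula
  rw [Nat.eq_of_mul_eq_mul_left (Nat.totient_pos.mpr hm) gcd_formula, mul_comm]

theorem pow_mul_totient_modEq_one {n m : ℕ} (h : n.Coprime m) (k : ℕ) :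
    n ^ (m * m.totient * k) ≡ 1 [MOD m ^ 2] := by
  have euler : n ^ (m * m.totient) ≡ 1 [MOD m ^ 2] := by
    simpa only [totient_sq] using Nat.ModEq.pow_totient (h.pow_right 2)
  simpa only [← pow_mul, one_pow] using euler.pow k

theorem stmt_14_general (n m : ℕ) (hn : 1 < n) (hnm : n.Coprime m) (hrad : rad n ≤ m) :
    ∀ k : ℕ, 0 < k →
      IsABCTriple 1 (n ^ (m * m.totient * k) - 1) (n ^ (m * m.totient * k)) := by
  intro k hk
  have hm : 0 < m := (rad_pos n).trans_le hrad
  have he : 0 < m * m.totient * k := Nat.mul_pos (Nat.mul_pos hm (Nat.totient_pos.mpr hm)) hk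
  exact isABCTriple_one_pow_sub_one hn he.ne' (pow_mul_totient_modEq_one hnm k) hrad

theorem stmt_14 (n p : ℕ) (hn : 1 < n) (hp : p.Prime) (hodd : Odd p) (hrad : rad n < p) :
    ∀ k : ℕ, 0 < k →
      IsABCTriple 1 (n ^ (p * (p - 1) * k) - 1) (n ^ (p * (p - 1) * k)) := by
  simpa only [Nat.totient_prime hp] using
    stmt_14_general n p hn (coprime_of_rad_lt_prime hp (by omega) hrad) hrad.le
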